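/- Let n ≡ s (mod 3) be a positive odd integer with s ∈ {1, −1}. Then, modulo Φ_n(−q)^3 Φ_n(q)^2, one has Σ_{k=0}^{(n−s)/3} (−1)^k · (1+q^{6k+s})(q^{2s};q^6)_k^3 / ((1+q^s)(q^6;q^6)_k^3) · q^{3k^2+2k(3−s)} ≡ (−1)^{(n−s)/3} · ([n]_{q^2}/[s]_{q^2}) · q^{(n−s)(n+s−3)/3} · Σ_{k=0}^{(n−s)/3} (q^{2s};q^6)_k^2 (q^3;q^6)_k / ((q^6, q^{3+s}, q^{6+s}; q^6)_k) · q^{2k(3−s)}. -/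

import Mathlib

open Finset Polynomial

/-- The q-shifted factorial `(x; q)_k = ∏_{j=0}^{k-1} (1 - x q^j)`. -/
noncomputable def qPoch (x q : RatFunc ℚ) (k : ℕ) : RatFunc ℚ :=
  ∏ j ∈ Finset.range k, (1 - x * q ^ j)

/-- The q-integer `[m]_q = (1 - q^m)/(1 - q)` (with integer `m`). -/
noncomputable def qInt (q : RatFunc ℚ) (m : ℤ) : RatFunc ℚ :=
  (1 - q ^ m) / (1 - q)

/-!
Write `q` for the base, `p = q³`, `r = q^s` and `w = r p^N = q^n`. Deform the cubes on both sides by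
a parameter `z`, so that everything depends only on `y = z + 1/z` and the sums in question are at
`y = 2`. At `z = w²` the two sides agree exactly: this is Bailey's lemma applied to a very simple
Bailey pair. For every `z`, the difference of the two sides has a numerator divisible by `1 - w²`:
modulo `1 + w` the terms `k` and `N - k` of the left side cancel, and the remaining factors are
visible. Hence the numerator, a polynomial in `y` that is divisible by `1 - w²` and vanishes at
`y = w² + w⁻²`, takes at `y = 2` a value divisible by `(1 - w²)(2 - w² - w⁻²)`, that is, by
`(1 - w²)³`. The common denominator contains exactly one factor `1 - q^n` and is otherwise prime to
`Φ_n(q) Φ_n(-q)`, which leaves `(1 + q^n)³ (1 - q^n)²`.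
-/

section Pochhammer

variable {R S : Type*} [CommRing R] [CommRing S]

/-- The q-shifted factorial `(x; q)_k` over an arbitrary commutative ring. -/
def qPochhammer (x q : R) (k : ℕ) : R :=
  ∏ j ∈ range k, (1 - x * q ^ j)

@[simp]
lemma qPochhammer_zero (x q : R) : qPochhammer x q 0 = 1 :=
  prod_range_zero _

lemma qPochhammer_succ (x q : R) (k : ℕ) :
    qPochhammer x q (k + 1) = qPochhammer x q k * (1 - x * q ^ k) :=
  prod_range_succ _ _

lemma qPochhammer_add (x q : R) (j m : ℕ) :
    qPochhammer x q (j + m) = qPochhammer x q j * qPochhammer (x * q ^ j) q m := by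
  simp only [qPochhammer, prod_range_add, pow_add, mul_assoc]

lemma qPochhammer_mul_sub (x q : R) {k n : ℕ} (h : k ≤ n) :
    qPochhammer x q k * qPochhammer (x * q ^ k) q (n - k) = qPochhammer x q n := by
  rw [← qPochhammer_add, Nat.add_sub_cancel' h]

lemma qPochhammer_succ_left (x q : R) (k : ℕ) :
    qPochhammer x q (k + 1) = (1 - x) * qPochhammer (x * q) q k := by
  rw [add_comm, qPochhammer_add]
  simp [qPochhammer_succ]

lemma map_qPochhammer (f : R →+* S) (x q : R) (k : ℕ) :
    f (qPochhammer x q k) = qPochhammer (f x) (f q) k := by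
  simp [qPochhammer]

lemma qPochhammer_ne_zero [IsDomain R] {x q : R} (h : ∀ j, 1 - x * q ^ j ≠ 0)
    (k : ℕ) : qPochhammer x q k ≠ 0 :=
  prod_ne_zero_iff.2 fun j _ ↦ h j

lemma pow_choose_two_succ (q : R) (k : ℕ) :
    q ^ (k + 1).choose 2 = q ^ k.choose 2 * q ^ k := by
  rw [Nat.choose_succ_succ', Nat.choose_one_right, pow_add, mul_comm]

lemma pow_choose_two_add (q : R) (r i : ℕ) :
    q ^ (r + i).choose 2 = q ^ r.choose 2 * q ^ i.choose 2 * (q ^ r) ^ i := by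
  induction i with
  | zero => simp
  | succ i ih =>
    rw [← add_assoc, pow_choose_two_succ, pow_choose_two_succ, ih]
    ring

lemma sq_pow_choose_two_mul_pow (q : R) (k : ℕ) : (q ^ 2) ^ k.choose 2 * q ^ k = q ^ k ^ 2 := by
  induction k with
  | zero => simp
  | succ k ih =>
    rw [pow_choose_two_succ, show q ^ (k + 1) ^ 2 = q ^ k ^ 2 * (q ^ 2) ^ k * q by ring, ← ih]
    ring

lemma qPochhammer_two_mul (x q : R) (k : ℕ) :
    qPochhammer x q (2 * k) = qPochhammer x (q ^ 2) k * qPochhammer (x * q) (q ^ 2) k := by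
  induction k with
  | zero => simp
  | succ k ih =>
    rw [mul_add_one, qPochhammer_succ, qPochhammer_succ, ih, qPochhammer_succ, qPochhammer_succ]
    ring

lemma qPochhammer_reflect {x y q : R} {k : ℕ} (h : x * y * q ^ k = 1) :
    qPochhammer x q k = (-x) ^ k * q ^ k.choose 2 * qPochhammer (y * q) q k := by
  have factor : ∀ j ∈ range k, 1 - x * q ^ j = -x * q ^ j * (1 - y * q * q ^ (k - 1 - j)) := by
    intro j hj
    have split : q ^ k = q ^ j * (q * q ^ (k - 1 - j)) := by
      rw [← pow_succ', ← pow_add]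
      congr 1
      have := mem_range.1 hj
      omega
    rw [split] at h
    linear_combination -h
  rw [qPochhammer, prod_congr rfl factor, prod_mul_distrib, prod_mul_distrib, prod_const,
    card_range, prod_pow_eq_pow_sum, sum_range_id, ← Nat.choose_two_right, qPochhammer,
    prod_range_reflect (fun j ↦ 1 - y * q * q ^ j) k]

/-- The product `(xz, x/z; q)_k`, written as a polynomial in `y = z + 1/z` so that it also makes
sense where `z` is not available. -/
def qPochhammerPair (x q y : R) (k : ℕ) : R :=
  ∏ j ∈ range k, (1 - x * q ^ j * y + (x * q ^ j) ^ 2)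

lemma qPochhammerPair_mul_sub (x q y : R) {k n : ℕ} (h : k ≤ n) :
    qPochhammerPair x q y k * qPochhammerPair (x * q ^ k) q y (n - k) =
      qPochhammerPair x q y n := by
  rw [qPochhammerPair, qPochhammerPair, qPochhammerPair]
  conv_rhs => rw [← Nat.add_sub_cancel' h]
  simp only [prod_range_add, pow_add, mul_assoc]

lemma qPochhammerPair_add_of_mul_eq_one (x q : R) {z z' : R} (h : z * z' = 1) (k : ℕ) :
    qPochhammerPair x q (z + z') k = qPochhammer (x * z) q k * qPochhammer (x * z') q k := by
  rw [qPochhammerPair, qPochhammer, qPochhammer, ← prod_mul_distrib]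
  refine prod_congr rfl fun j _ ↦ ?_
  linear_combination -(x * q ^ j) ^ 2 * h

lemma qPochhammerPair_two (x q : R) (k : ℕ) : qPochhammerPair x q 2 k = qPochhammer x q k ^ 2 := by
  rw [← one_add_one_eq_two, qPochhammerPair_add_of_mul_eq_one x q (one_mul 1), mul_one, sq]

lemma map_qPochhammerPair (f : R →+* S) (x q y : R) (k : ℕ) :
    f (qPochhammerPair x q y k) = qPochhammerPair (f x) (f q) (f y) k := by
  simp [qPochhammerPair]

lemma qPochhammerPair_reflect {x x' q : R} {k : ℕ} (h : x * x' * q ^ k = 1) (y : R) :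
    qPochhammerPair x q y k = ((-x) ^ k * q ^ k.choose 2) ^ 2 * qPochhammerPair (x' * q) q y k := by
  have factor : ∀ j ∈ range k, 1 - x * q ^ j * y + (x * q ^ j) ^ 2 =
      (-x * q ^ j) ^ 2 * (1 - x' * q * q ^ (k - 1 - j) * y + (x' * q * q ^ (k - 1 - j)) ^ 2) := by
    intro j hj
    have split : q ^ k = q ^ j * (q * q ^ (k - 1 - j)) := by
      rw [← pow_succ', ← pow_add]
      congr 1
      have := mem_range.1 hj
      omega
    rw [split] at h
    linear_combination (x * q ^ j * y - (x * x' * (q ^ j * (q * q ^ (k - 1 - j))) + 1)) * h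
  rw [qPochhammerPair, prod_congr rfl factor, prod_mul_distrib, prod_pow, prod_mul_distrib,
    prod_const, card_range, prod_pow_eq_pow_sum, sum_range_id, ← Nat.choose_two_right,
    qPochhammerPair,
    prod_range_reflect (fun j ↦ 1 - x' * q * q ^ j * y + (x' * q * q ^ j) ^ 2) k]

end Pochhammer

section Summations

variable {K : Type*} [Field K]

/-- Zeilberger's method. The second argument of `F` is `n - i`, so that the certificate identities
contain no truncated subtraction. -/
lemma sum_range_eq_of_certificate {F G : ℕ → ℕ → K} {u v S : ℕ → K} (hu : ∀ n, u n ≠ 0)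
    (first : ∀ m, u m * F 0 (m + 1) - v m * F 0 m = G 0 m)
    (next : ∀ i m, u (i + 1 + m) * F (i + 1) (m + 1) - v (i + 1 + m) * F (i + 1) m =
      G (i + 1) m - G i (m + 1))
    (last : ∀ n, u n * F (n + 1) 0 = -G n 0)
    (zero : F 0 0 = S 0) (succ : ∀ n, u n * S (n + 1) = v n * S n) (n : ℕ) :
    ∑ i ∈ range (n + 1), F i (n - i) = S n := by
  have telescope : ∀ i m, ∑ k ∈ range (i + 1),
      (u (i + m) * F k (i + m + 1 - k) - v (i + m) * F k (i + m - k)) = G i m := by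
    intro i
    induction i with
    | zero => simpa using first
    | succ i ih =>
      intro m
      have h := ih (m + 1)
      rw [← add_assoc, add_right_comm] at h
      rw [sum_range_succ, h, show i + 1 + m + 1 - (i + 1) = m + 1 by omega,
        show i + 1 + m - (i + 1) = m by omega, next]
      ring
  induction n with
  | zero => simpa using zero
  | succ n ih =>
    have h := telescope n 0
    rw [sum_sub_distrib, ← mul_sum, ← mul_sum, add_zero, ih, ← succ] at h
    rw [← mul_right_inj' (hu n), sum_range_succ, Nat.sub_self, mul_add, last]
    linear_combination h

/-- Taking `d = c / b` as a parameter keeps the sum free of divisions. -/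
theorem sum_qVandermonde {b c d q : K} (hbd : c = b * d) (hq : ∀ j, 1 - q * q ^ j ≠ 0)
    (hc : ∀ j, 1 - c * q ^ j ≠ 0) (n : ℕ) :
    ∑ i ∈ range (n + 1), (-d) ^ i * q ^ i.choose 2 * qPochhammer b q i /
        (qPochhammer q q i * qPochhammer c q i * qPochhammer q q (n - i)) =
      qPochhammer d q n / (qPochhammer q q n * qPochhammer c q n) := by
  refine sum_range_eq_of_certificate
    (F := fun i m ↦ (-d) ^ i * q ^ i.choose 2 * qPochhammer b q i /
      (qPochhammer q q i * qPochhammer c q i * qPochhammer q q m))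
    (G := fun i m ↦ -((-d) ^ (i + 1) * q ^ (i + 1).choose 2 * q ^ m * qPochhammer b q (i + 1)) /
      (qPochhammer q q i * qPochhammer c q i * qPochhammer q q m))
    (u := fun n ↦ (1 - q * q ^ n) * (1 - c * q ^ n)) (v := fun n ↦ 1 - d * q ^ n)
    (S := fun n ↦ qPochhammer d q n / (qPochhammer q q n * qPochhammer c q n))
    (fun n ↦ mul_ne_zero (hq n) (hc n)) (fun m ↦ ?_) (fun i m ↦ ?_) (fun n ↦ ?_) (by simp)
    (fun n ↦ ?_) n
  · have hm := hq m
    have hqm := qPochhammer_ne_zero hq m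
    simp only [qPochhammer_succ, qPochhammer_zero, pow_choose_two_succ, pow_succ, pow_zero,
      Nat.choose_zero_succ]
    generalize 1 - q * q ^ m = z at *
    field_simp
    rw [hbd]
    ring
  · have hi := hq i
    have hm := hq m
    have hci := hc i
    have hqi := qPochhammer_ne_zero hq i
    have hqm := qPochhammer_ne_zero hq m
    have hcqi := qPochhammer_ne_zero hc i
    simp only [qPochhammer_succ, pow_choose_two_succ, pow_add, pow_one]
    generalize hx : 1 - q * q ^ i = x at *
    generalize hy : 1 - c * q ^ i = y at *
    generalize hz : 1 - q * q ^ m = z at *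
    field_simp
    rw [← hx, ← hy, ← hz, hbd]
    ring
  all_goals
    have hn := hq n
    have hcn := hc n
    have hqn := qPochhammer_ne_zero hq n
    have hcqn := qPochhammer_ne_zero hc n
    simp only [qPochhammer_succ, qPochhammer_zero, pow_choose_two_succ]
    generalize 1 - q * q ^ n = x at *
    generalize 1 - c * q ^ n = y at *
    field_simp

lemma veryWellPoised_certificate {a b c e f g q : K} (he : e = c * g) (hf : f = b * g)
    (hg : a * q = b * c * g) (hq : ∀ j, 1 - q * q ^ j ≠ 0) (haq : ∀ j, 1 - a * q * q ^ j ≠ 0)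
    (i m : ℕ) :
    (1 - a * q ^ (2 * (i + 1))) *
        ((1 - q * q ^ (i + 1 + m)) * (1 - e * q ^ (i + 1 + m)) * (1 - f * q ^ (i + 1 + m)) /
          (qPochhammer q q (m + 1) * qPochhammer (a * q) q (2 * (i + 1) + m + 1)) -
        (1 - g * q ^ (i + 1 + m)) /
          (qPochhammer q q m * qPochhammer (a * q) q (2 * (i + 1) + m))) =
      g * q ^ (i + 1) * q ^ m *
          ((1 - a * q ^ (i + 1)) * (1 - b * q ^ (i + 1)) * (1 - c * q ^ (i + 1))) /
          (qPochhammer q q m * qPochhammer (a * q) q (2 * (i + 1) + m + 1)) +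
        q ^ (m + 1) * ((1 - q * q ^ i) * (1 - e * q ^ i) * (1 - f * q ^ i)) /
          (qPochhammer q q (m + 1) * qPochhammer (a * q) q (2 * (i + 1) + m)) := by
  have numerators : (1 - a * q ^ (2 * (i + 1))) *
        ((1 - q * q ^ (i + 1 + m)) * (1 - e * q ^ (i + 1 + m)) * (1 - f * q ^ (i + 1 + m)) -
        (1 - g * q ^ (i + 1 + m)) * (1 - q * q ^ m) * (1 - a * q * q ^ (2 * (i + 1) + m))) =
      g * q ^ (i + 1) * q ^ m * ((1 - a * q ^ (i + 1)) * (1 - b * q ^ (i + 1)) *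
          (1 - c * q ^ (i + 1))) * (1 - q * q ^ m) +
        q ^ (m + 1) * ((1 - q * q ^ i) * (1 - e * q ^ i) * (1 - f * q ^ i)) *
          (1 - a * q * q ^ (2 * (i + 1) + m)) := by
    rw [pow_succ' q i, show 2 * (i + 1) = 2 * i + 1 + 1 by ring, pow_succ' q (2 * i + 1),
      ← mul_assoc a, ← mul_assoc a, hg, he, hf]
    ring
  have hm := hq m
  have hqm := qPochhammer_ne_zero hq m
  have ham := haq (2 * (i + 1) + m)
  have haqm := qPochhammer_ne_zero haq (2 * (i + 1) + m)
  rw [qPochhammer_succ _ _ m, qPochhammer_succ _ _ (2 * (i + 1) + m)]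
  generalize 1 - q * q ^ m = x at *
  generalize 1 - a * q * q ^ (2 * (i + 1) + m) = y at *
  generalize qPochhammer (a * q) q (2 * (i + 1) + m) = z at *
  field_simp
  linear_combination numerators

lemma veryWellPoised_certificate_zero {a b c e f g q : K} (he : e = c * g) (hf : f = b * g)
    (hg : a * q = b * c * g) (hq : ∀ j, 1 - q * q ^ j ≠ 0) (haq : ∀ j, 1 - a * q * q ^ j ≠ 0)
    (m : ℕ) :
    (1 - a) * ((1 - q * q ^ m) * (1 - e * q ^ m) * (1 - f * q ^ m) /
          (qPochhammer q q (m + 1) * qPochhammer (a * q) q (m + 1)) -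
        (1 - g * q ^ m) / (qPochhammer q q m * qPochhammer (a * q) q m)) =
      g * q ^ m * ((1 - a) * (1 - b) * (1 - c)) /
        (qPochhammer q q m * qPochhammer (a * q) q (m + 1)) := by
  have hm := hq m
  have ham := haq m
  have hqm := qPochhammer_ne_zero hq m
  have haqm := qPochhammer_ne_zero haq m
  simp only [qPochhammer_succ]
  generalize 1 - q * q ^ m = x at *
  generalize hy : 1 - a * q * q ^ m = y at *
  rw [hg] at hy
  field_simp
  rw [← hy, he, hf]
  ring

lemma sum_veryWellPoised_of_recurrence {a b c e f g q : K} (he : e = c * g) (hf : f = b * g)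
    (hg : a * q = b * c * g) (hq : ∀ j, 1 - q * q ^ j ≠ 0) (haq : ∀ j, 1 - a * q * q ^ j ≠ 0)
    (he' : ∀ j, 1 - e * q ^ j ≠ 0) (hf' : ∀ j, 1 - f * q ^ j ≠ 0) {B : ℕ → K} (hB₀ : B 0 = 1)
    (hB : ∀ i, (1 - q * q ^ i) * (1 - e * q ^ i) * (1 - f * q ^ i) * B (i + 1) =
      -g * q ^ i * ((1 - a * q ^ i) * (1 - b * q ^ i) * (1 - c * q ^ i)) * B i) (n : ℕ) :
    ∑ i ∈ range (n + 1), (1 - a * q ^ (2 * i)) * B i /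
        (qPochhammer q q (n - i) * qPochhammer (a * q) q (n + i)) =
      (1 - a) * qPochhammer g q n /
        (qPochhammer q q n * qPochhammer e q n * qPochhammer f q n) := by
  calc
    _ = ∑ i ∈ range (n + 1), (1 - a * q ^ (2 * i)) * B i /
        (qPochhammer q q (n - i) * qPochhammer (a * q) q (2 * i + (n - i))) := by
      refine sum_congr rfl fun i hi ↦ ?_
      have := mem_range.1 hi
      rw [show 2 * i + (n - i) = n + i by omega]
    _ = _ := sum_range_eq_of_certificate
      (F := fun i m ↦ (1 - a * q ^ (2 * i)) * B i /
        (qPochhammer q q m * qPochhammer (a * q) q (2 * i + m)))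
      (G := fun i m ↦ -(q ^ m * ((1 - q * q ^ i) * (1 - e * q ^ i) * (1 - f * q ^ i) *
        B (i + 1))) / (qPochhammer q q m * qPochhammer (a * q) q (2 * i + m + 1)))
      (u := fun n ↦ (1 - q * q ^ n) * (1 - e * q ^ n) * (1 - f * q ^ n))
      (v := fun n ↦ 1 - g * q ^ n)
      (S := fun n ↦ (1 - a) * qPochhammer g q n /
        (qPochhammer q q n * qPochhammer e q n * qPochhammer f q n))
      (fun n ↦ mul_ne_zero (mul_ne_zero (hq n) (he' n)) (hf' n))
      (fun m ↦ ?_) (fun i m ↦ ?_) (fun n ↦ ?_) (by simp [hB₀]) (fun n ↦ ?_) n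
  · rw [hB 0, hB₀]
    simp only [mul_zero, zero_add, pow_zero, mul_one]
    linear_combination veryWellPoised_certificate_zero he hf hg hq haq m
  · rw [← add_assoc (2 * (i + 1)) m 1, show 2 * i + (m + 1) + 1 = 2 * (i + 1) + m by ring,
      hB (i + 1)]
    linear_combination B (i + 1) * veryWellPoised_certificate he hf hg hq haq i m
  · have han := haq (2 * n + 1)
    have := qPochhammer_ne_zero haq (2 * n + 1)
    simp only [mul_add, mul_one, add_zero, qPochhammer_zero, pow_zero, one_mul,
      qPochhammer_succ _ _ (2 * n + 1)]
    rw [pow_succ' q (2 * n + 1), ← mul_assoc a]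
    generalize 1 - a * q * q ^ (2 * n + 1) = x at *
    field_simp
  · have hn := hq n
    have hen := he' n
    have hfn := hf' n
    simp only [qPochhammer_succ]
    generalize 1 - q * q ^ n = x at *
    generalize 1 - e * q ^ n = y at *
    generalize 1 - f * q ^ n = z at *
    field_simp

lemma sum_bailey_kernel {a q ρ σ : K} (hρσ : a * q = ρ * σ) (hq : ∀ j, 1 - q * q ^ j ≠ 0)
    (haq : ∀ j, 1 - a * q * q ^ j ≠ 0) {r n : ℕ} (hrn : r ≤ n) (hσ : qPochhammer σ q n ≠ 0) :
    ∑ i ∈ range (n - r + 1), (-σ) ^ (r + i) * q ^ (r + i).choose 2 * qPochhammer ρ q (r + i) /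
        (qPochhammer q q (n - (r + i)) * (qPochhammer q q i * qPochhammer (a * q) q (2 * r + i))) =
      (-σ) ^ r * q ^ r.choose 2 * qPochhammer ρ q r / qPochhammer σ q r * qPochhammer σ q n /
        (qPochhammer q q (n - r) * qPochhammer (a * q) q (n + r)) := by
  have haqr : ∀ j, 1 - a * q * q ^ (2 * r) * q ^ j ≠ 0 := fun j ↦ by
    simpa only [pow_add, mul_assoc] using haq (2 * r + j)
  have vandermonde := sum_qVandermonde (b := ρ * q ^ r) (c := a * q * q ^ (2 * r))
    (d := σ * q ^ r) (by rw [hρσ]; ring) hq haqr (n - r)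
  rw [← qPochhammer_mul_sub σ q hrn] at hσ ⊢
  calc
    _ = ∑ i ∈ range (n - r + 1), (-σ) ^ r * q ^ r.choose 2 * qPochhammer ρ q r /
        qPochhammer (a * q) q (2 * r) *
          ((-(σ * q ^ r)) ^ i * q ^ i.choose 2 * qPochhammer (ρ * q ^ r) q i / (qPochhammer q q i *
            qPochhammer (a * q * q ^ (2 * r)) q i * qPochhammer q q (n - r - i))) := by
      refine sum_congr rfl fun i _ ↦ ?_
      simp only [qPochhammer_add, pow_choose_two_add, pow_add, neg_mul_eq_neg_mul, mul_pow,
        Nat.sub_sub]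
      ring
    _ = _ := by
      rw [← mul_sum, vandermonde, show n + r = 2 * r + (n - r) by omega, qPochhammer_add (a * q)]
      have := left_ne_zero_of_mul hσ
      field_simp

/-- Bailey pairs relative to `a`: the relation `β_n = ∑_{i ≤ n} α_i / ((q; q)_{n-i} (aq; q)_{n+i})`,
which Bailey's lemma turns into transformations of basic hypergeometric sums. -/
def IsBaileyPair (a q : K) (α β : ℕ → K) : Prop :=
  ∀ n, ∑ i ∈ range (n + 1), α i / (qPochhammer q q (n - i) * qPochhammer (a * q) q (n + i)) = β n

/-- The form of Bailey's lemma in which one of the two free parameters is `q⁻ⁿ`. -/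
theorem IsBaileyPair.sum_eq {a q ρ σ : K} {α β : ℕ → K} (h : IsBaileyPair a q α β)
    (hρσ : a * q = ρ * σ) (hq : ∀ j, 1 - q * q ^ j ≠ 0) (haq : ∀ j, 1 - a * q * q ^ j ≠ 0) {n : ℕ}
    (hσ : qPochhammer σ q n ≠ 0) :
    ∑ k ∈ range (n + 1), (-σ) ^ k * q ^ k.choose 2 * qPochhammer ρ q k / qPochhammer σ q k *
        qPochhammer σ q n * α k / (qPochhammer q q (n - k) * qPochhammer (a * q) q (n + k)) =
      ∑ j ∈ range (n + 1), (-σ) ^ j * q ^ j.choose 2 * qPochhammer ρ q j * β j /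
        qPochhammer q q (n - j) := by
  set w : ℕ → K := fun j ↦ (-σ) ^ j * q ^ j.choose 2 * qPochhammer ρ q j
  calc
    _ = ∑ r ∈ range (n + 1), ∑ i ∈ range (n + 1 - r), w (r + i) / (qPochhammer q q (n - (r + i)) *
          (qPochhammer q q i * qPochhammer (a * q) q (2 * r + i))) * α r := by
      refine sum_congr rfl fun r hr ↦ ?_
      have hrn := Nat.lt_succ_iff.1 (mem_range.1 hr)
      rw [Nat.sub_add_comm hrn, ← sum_mul, sum_bailey_kernel hρσ hq haq hrn hσ]
      ring
    _ = ∑ j ∈ range (n + 1), ∑ r ∈ range (j + 1),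
        w (r + (j - r)) / (qPochhammer q q (n - (r + (j - r))) *
          (qPochhammer q q (j - r) * qPochhammer (a * q) q (2 * r + (j - r)))) * α r := by
      rw [sum_range_diag_flip (n + 1) fun r i ↦ w (r + i) / (qPochhammer q q (n - (r + i)) *
          (qPochhammer q q i * qPochhammer (a * q) q (2 * r + i))) * α r]
    _ = _ := by
      refine sum_congr rfl fun j _ ↦ ?_
      rw [← h j, mul_sum, sum_div]
      refine sum_congr rfl fun r hr ↦ ?_
      have hrj := Nat.lt_succ_iff.1 (mem_range.1 hr)
      rw [Nat.add_sub_cancel' hrj, show 2 * r + (j - r) = j + r by omega]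
      ring

/-- The very-well-poised sum obtained from the left side by deforming `(a; q)_k^3 / (q; q)_k^3` to
`(a, az, a/z; q)_k / (q, qz, q/z; q)_k` with `y = z + 1/z`; the undeformed sum is `y = 2`.
Here `a = r²` and the base is `p²`. -/
def leftSum (p r y : K) (N : ℕ) : K :=
  ∑ k ∈ range (N + 1), (-1) ^ k *
    ((1 + r * (p ^ 2) ^ k) *
      (qPochhammer (r ^ 2) (p ^ 2) k * qPochhammerPair (r ^ 2) (p ^ 2) y k)) /
      ((1 + r) * (qPochhammer (p ^ 2) (p ^ 2) k * qPochhammerPair (p ^ 2) (p ^ 2) y k)) *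
    (p ^ (k ^ 2 + 2 * k) / r ^ (2 * k))

/-- The balanced series into which Watson's transformation turns `leftSum`; the parameters are
those of `leftSum`. -/
def balancedSum (p r y : K) (N : ℕ) : K :=
  ∑ k ∈ range (N + 1), qPochhammerPair (r ^ 2) (p ^ 2) y k * qPochhammer p (p ^ 2) k /
    (qPochhammer (p ^ 2) (p ^ 2) k * qPochhammer (r * p) (p ^ 2) k *
      qPochhammer (r * p ^ 2) (p ^ 2) k) * (p ^ (2 * k) / r ^ (2 * k))

/-- The balanced side of the transformation of `leftSum`, including its prefactor. -/
def rightSum (p r y : K) (N : ℕ) : K :=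
  (-1) ^ N * ((1 - (r * p ^ N) ^ 2) / (1 - r ^ 2)) * ((p ^ 2) ^ N.choose 2 * r ^ (2 * N)) *
    balancedSum p r y N

section Watson

variable {p r : K}

lemma one_sub_ne_zero_of_sq {x : K} (h : 1 - x ^ 2 ≠ 0) : 1 - x ≠ 0 := fun h' ↦
  h (by linear_combination (1 + x) * h')

lemma one_sub_mul_pow_ne_zero (ha : ∀ j, 1 - r ^ 2 * (p ^ 2) ^ j ≠ 0) (i j : ℕ) :
    1 - r * p ^ i * (p ^ 2) ^ j ≠ 0 :=
  one_sub_ne_zero_of_sq fun h ↦ ha (i + 2 * j) (by rw [← h]; ring)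

lemma isBaileyPair_of_sq (hq : ∀ j, 1 - p ^ 2 * (p ^ 2) ^ j ≠ 0)
    (ha : ∀ j, 1 - r ^ 2 * (p ^ 2) ^ j ≠ 0) :
    IsBaileyPair (r ^ 2) (p ^ 2)
      (fun k ↦ (1 + r * (p ^ 2) ^ k) * ((-p) ^ k * (p ^ 2) ^ k.choose 2 *
        qPochhammer (r ^ 2) (p ^ 2) k / qPochhammer (p ^ 2) (p ^ 2) k))
      (fun n ↦ (1 + r) * qPochhammer p (p ^ 2) n / (qPochhammer (p ^ 2) (p ^ 2) n *
        qPochhammer (r * p ^ 2) (p ^ 2) n * qPochhammer (r * p) (p ^ 2) n)) := by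
  have hrp := one_sub_mul_pow_ne_zero ha
  have hr₀ : ∀ j, 1 - r * (p ^ 2) ^ j ≠ 0 := by simpa using hrp 0
  have hr₁ : ∀ j, 1 - r * p * (p ^ 2) ^ j ≠ 0 := by simpa using hrp 1
  have hr : 1 - r ≠ 0 := by simpa using hr₀ 0
  have haq : ∀ j, 1 - r ^ 2 * p ^ 2 * (p ^ 2) ^ j ≠ 0 := fun j ↦ by
    simpa only [pow_succ', mul_assoc] using ha (j + 1)
  set B : ℕ → K := fun k ↦ (1 - r) / (1 - r * (p ^ 2) ^ k) * ((-p) ^ k * (p ^ 2) ^ k.choose 2 *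
    qPochhammer (r ^ 2) (p ^ 2) k / qPochhammer (p ^ 2) (p ^ 2) k) with hB
  intro n
  have sum := sum_veryWellPoised_of_recurrence (a := r ^ 2) (b := r) (c := r * p) (e := r * p ^ 2)
    (f := r * p) (g := p) (q := p ^ 2) (B := B) (by ring) rfl (by ring) hq haq (hrp 2) hr₁
    (by simp [hB, hr]) ?_ n
  · rw [← mul_right_inj' hr, mul_sum]
    calc
      _ = _ := sum_congr rfl fun i _ ↦ ?_
      _ = _ := sum
      _ = _ := by ring
    have := hr₀ i
    simp only [hB]
    rw [show 1 - r ^ 2 * (p ^ 2) ^ (2 * i) = (1 - r * (p ^ 2) ^ i) * (1 + r * (p ^ 2) ^ i) by ring]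
    field_simp
  · intro i
    have hqi := hq i
    have hri := hr₀ i
    have hri₁ := hr₀ (i + 1)
    have hqqi := qPochhammer_ne_zero hq i
    simp only [hB, qPochhammer_succ, pow_choose_two_succ]
    rw [show r * p ^ 2 * (p ^ 2) ^ i = r * (p ^ 2) ^ (i + 1) by ring]
    generalize 1 - r * (p ^ 2) ^ (i + 1) = x at *
    generalize 1 - r * (p ^ 2) ^ i = y at *
    generalize 1 - p ^ 2 * (p ^ 2) ^ i = z at *
    field_simp
    ring

lemma qPochhammerPair_mul_qPochhammer (hp : p ≠ 0) (hr : r ≠ 0) {N k : ℕ} (h : k ≤ N) :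
    qPochhammerPair (r ^ 2) (p ^ 2) ((r * p ^ N) ^ 2 + ((r * p ^ N) ^ 2)⁻¹) k *
        qPochhammer (p ^ 2) (p ^ 2) (N - k) * (p ^ (2 * k) / r ^ (2 * k)) =
      (-(p ^ 2 * ((r * p ^ N) ^ 2)⁻¹)) ^ k * (p ^ 2) ^ k.choose 2 *
        qPochhammer (r ^ 2 * (r * p ^ N) ^ 2) (p ^ 2) k * qPochhammer (p ^ 2) (p ^ 2) N := by
  have hw : r * p ^ N ≠ 0 := mul_ne_zero hr (pow_ne_zero _ hp)
  have inverse : r ^ 2 * ((r * p ^ N) ^ 2)⁻¹ * (p ^ 2) ^ (N - k) * (p ^ 2) ^ k = 1 := by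
    rw [mul_assoc _ ((p ^ 2) ^ (N - k)), ← pow_add, Nat.sub_add_cancel h]
    field_simp
    ring
  have split := qPochhammer_add (p ^ 2) (p ^ 2) (N - k) k
  have power : (-(p ^ 2 * ((r * p ^ N) ^ 2)⁻¹)) ^ k =
      (-(r ^ 2 * ((r * p ^ N) ^ 2)⁻¹)) ^ k * (p ^ (2 * k) / r ^ (2 * k)) := by
    rw [pow_mul, pow_mul, ← div_pow, ← mul_pow]
    congr 1
    field_simp
  rw [Nat.sub_add_cancel h] at split
  rw [qPochhammerPair_add_of_mul_eq_one _ _ (mul_inv_cancel₀ (pow_ne_zero 2 hw)),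
    qPochhammer_reflect inverse, split, power, mul_comm (p ^ 2) ((p ^ 2) ^ (N - k))]
  ring

lemma qPochhammerPair_mul_qPochhammer_add (hp : p ≠ 0) (hr : r ≠ 0) (N k : ℕ) :
    qPochhammerPair (p ^ 2) (p ^ 2) ((r * p ^ N) ^ 2 + ((r * p ^ N) ^ 2)⁻¹) k *
        qPochhammer (r ^ 2 * p ^ 2) (p ^ 2) N =
      qPochhammer (p ^ 2 * ((r * p ^ N) ^ 2)⁻¹) (p ^ 2) k *
        qPochhammer (r ^ 2 * p ^ 2) (p ^ 2) (N + k) := by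
  have hw : r * p ^ N ≠ 0 := mul_ne_zero hr (pow_ne_zero _ hp)
  rw [qPochhammerPair_add_of_mul_eq_one _ _ (mul_inv_cancel₀ (pow_ne_zero 2 hw)),
    qPochhammer_add (r ^ 2 * p ^ 2),
    show r ^ 2 * p ^ 2 * (p ^ 2) ^ N = p ^ 2 * (r * p ^ N) ^ 2 by ring]
  ring

lemma qPochhammer_sq_reflect (hp : p ≠ 0) (hr : r ≠ 0) (N : ℕ) :
    qPochhammer (r ^ 2) (p ^ 2) N = (-r ^ 2) ^ N * (p ^ 2) ^ N.choose 2 *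
      qPochhammer (p ^ 2 * ((r * p ^ N) ^ 2)⁻¹) (p ^ 2) N := by
  have inverse : r ^ 2 * ((r * p ^ N) ^ 2)⁻¹ * (p ^ 2) ^ N = 1 := by
    field_simp
    ring
  rw [qPochhammer_reflect inverse, mul_comm (((r * p ^ N) ^ 2)⁻¹)]

lemma qPochhammer_mul_leftSum (hp : p ≠ 0) (hr : r ≠ 0)
    (hq : ∀ j, 1 - p ^ 2 * (p ^ 2) ^ j ≠ 0) (ha : ∀ j, 1 - r ^ 2 * (p ^ 2) ^ j ≠ 0) {N : ℕ}
    (hσ : qPochhammer (p ^ 2 * ((r * p ^ N) ^ 2)⁻¹) (p ^ 2) N ≠ 0) :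
    qPochhammer (p ^ 2 * ((r * p ^ N) ^ 2)⁻¹) (p ^ 2) N *
        leftSum p r ((r * p ^ N) ^ 2 + ((r * p ^ N) ^ 2)⁻¹) N =
      qPochhammer (r ^ 2 * p ^ 2) (p ^ 2) N *
        balancedSum p r ((r * p ^ N) ^ 2 + ((r * p ^ N) ^ 2)⁻¹) N := by
  have haq : ∀ j, 1 - r ^ 2 * p ^ 2 * (p ^ 2) ^ j ≠ 0 := fun j ↦ by
    simpa only [pow_succ', mul_assoc] using ha (j + 1)
  have : r * p ^ N ≠ 0 := mul_ne_zero hr (pow_ne_zero _ hp)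
  have ha₀ : 1 - r ^ 2 ≠ 0 := by simpa using ha 0
  have hr₁ : 1 + r ≠ 0 := fun h ↦ ha₀ (by linear_combination (1 - r) * h)
  have hQ := qPochhammer_ne_zero hq
  have haQ := qPochhammer_ne_zero haq
  have upper := fun k (hk : k ≤ N) ↦ qPochhammerPair_mul_qPochhammer hp hr hk
  have lower := qPochhammerPair_mul_qPochhammer_add hp hr N
  have bailey := (isBaileyPair_of_sq hq ha).sum_eq
    (ρ := r ^ 2 * (r * p ^ N) ^ 2) (by field_simp) hq haq hσ
  unfold leftSum balancedSum
  generalize p ^ 2 * ((r * p ^ N) ^ 2)⁻¹ = σ at *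
  generalize (r * p ^ N) ^ 2 + ((r * p ^ N) ^ 2)⁻¹ = y at *
  rw [← mul_right_inj' (div_ne_zero hr₁ (mul_ne_zero (hQ N) (haQ N))), mul_sum, mul_sum, mul_sum,
    mul_sum]
  refine (sum_congr rfl fun k hk ↦ ?_).trans (bailey.trans (sum_congr rfl fun k hk ↦ ?_))
  · have hkN := Nat.lt_succ_iff.1 (mem_range.1 hk)
    have := hQ (N - k)
    have := hQ N
    have := haQ N
    have := haQ (N + k)
    have lower' : qPochhammerPair (p ^ 2) (p ^ 2) y k = qPochhammer σ (p ^ 2) k *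
        qPochhammer (r ^ 2 * p ^ 2) (p ^ 2) (N + k) / qPochhammer (r ^ 2 * p ^ 2) (p ^ 2) N :=
      eq_div_of_mul_eq (haQ N) (lower k)
    rw [eq_div_of_mul_eq (hQ N) (upper k hkN).symm, lower', neg_pow p, pow_add,
      ← sq_pow_choose_two_mul_pow]
    field_simp
  · have hkN := Nat.lt_succ_iff.1 (mem_range.1 hk)
    have := hQ (N - k)
    have := hQ N
    have := haQ N
    rw [eq_div_of_mul_eq (hQ N) (upper k hkN).symm]
    field_simp

theorem leftSum_eq_rightSum (hp : p ≠ 0) (hr : r ≠ 0) (hq : ∀ j, 1 - p ^ 2 * (p ^ 2) ^ j ≠ 0)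
    (ha : ∀ j, 1 - r ^ 2 * (p ^ 2) ^ j ≠ 0) (N : ℕ) :
    leftSum p r ((r * p ^ N) ^ 2 + ((r * p ^ N) ^ 2)⁻¹) N =
      rightSum p r ((r * p ^ N) ^ 2 + ((r * p ^ N) ^ 2)⁻¹) N := by
  have ha₀ : 1 - r ^ 2 ≠ 0 := by simpa using ha 0
  have reflect := qPochhammer_sq_reflect hp hr N
  have shift : qPochhammer (r ^ 2) (p ^ 2) N * (1 - (r * p ^ N) ^ 2) =
      (1 - r ^ 2) * qPochhammer (r ^ 2 * p ^ 2) (p ^ 2) N := by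
    rw [← qPochhammer_succ_left, qPochhammer_succ]
    ring
  have hσ : qPochhammer (p ^ 2 * ((r * p ^ N) ^ 2)⁻¹) (p ^ 2) N ≠ 0 := fun h ↦
    qPochhammer_ne_zero ha N (by rw [reflect, h, mul_zero])
  rw [← mul_right_inj' hσ, qPochhammer_mul_leftSum hp hr hq ha hσ, rightSum,
    ← mul_right_inj' ha₀, ← mul_assoc, ← shift, reflect, neg_pow (r ^ 2)]
  field_simp
  ring

end Watson

end Summations

section Numerators

variable {R S K : Type*} [CommRing R] [CommRing S] [Field K]

/-- The numerator of `leftSum` over its common denominator. -/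
def leftNumerator (p r y : R) (N : ℕ) : R :=
  ∑ k ∈ range (N + 1), (-1) ^ k * (1 + r * (p ^ 2) ^ k) *
    (qPochhammer (r ^ 2) (p ^ 2) k * qPochhammer (p ^ 2 * (p ^ 2) ^ k) (p ^ 2) (N - k)) *
    (qPochhammerPair (r ^ 2) (p ^ 2) y k *
      qPochhammerPair (p ^ 2 * (p ^ 2) ^ k) (p ^ 2) y (N - k)) *
    (p ^ (k ^ 2 + 2 * k) * r ^ (2 * (N - k)))

/-- The numerator of `balancedSum` over its common denominator. -/
def balancedNumerator (p r y : R) (N : ℕ) : R :=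
  ∑ k ∈ range (N + 1), qPochhammerPair (r ^ 2) (p ^ 2) y k * qPochhammer p (p ^ 2) k *
    (qPochhammer (p ^ 2 * (p ^ 2) ^ k) (p ^ 2) (N - k) *
      qPochhammer (r * p * (p ^ 2) ^ k) (p ^ 2) (N - k) *
      qPochhammer (r * p ^ 2 * (p ^ 2) ^ k) (p ^ 2) (N - k)) * (p ^ (2 * k) * r ^ (2 * (N - k)))

/-- The numerator of `leftSum - rightSum` over a common denominator. It makes sense over any
commutative ring and is polynomial in `y`. -/
def differenceNumerator (p r y : R) (N : ℕ) : R :=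
  qPochhammer r p (2 * N + 1) * leftNumerator p r y N -
    (-1) ^ N * (1 - (r * p ^ N) ^ 2) * ((p ^ 2) ^ N.choose 2 * r ^ (2 * N)) *
      qPochhammerPair (p ^ 2) (p ^ 2) y N * balancedNumerator p r y N

lemma map_leftNumerator (f : R →+* S) (p r y : R) (N : ℕ) :
    f (leftNumerator p r y N) = leftNumerator (f p) (f r) (f y) N := by
  simp [leftNumerator, map_qPochhammer, map_qPochhammerPair]

lemma map_differenceNumerator (f : R →+* S) (p r y : R) (N : ℕ) :
    f (differenceNumerator p r y N) = differenceNumerator (f p) (f r) (f y) N := by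
  simp [differenceNumerator, balancedNumerator, map_leftNumerator, map_qPochhammer,
    map_qPochhammerPair]

variable {p r y : K} {N : ℕ}

lemma leftSum_eq_div (hr : r ≠ 0) (hq : qPochhammer (p ^ 2) (p ^ 2) N ≠ 0)
    (hy : qPochhammerPair (p ^ 2) (p ^ 2) y N ≠ 0) :
    leftSum p r y N = leftNumerator p r y N /
      ((1 + r) * qPochhammer (p ^ 2) (p ^ 2) N * qPochhammerPair (p ^ 2) (p ^ 2) y N *
        r ^ (2 * N)) := by
  rw [leftSum, leftNumerator, sum_div]
  refine sum_congr rfl fun k hk ↦ ?_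
  have hkN := Nat.lt_succ_iff.1 (mem_range.1 hk)
  rw [← qPochhammer_mul_sub _ _ hkN] at hq ⊢
  rw [← qPochhammerPair_mul_sub _ _ _ hkN] at hy ⊢
  have := right_ne_zero_of_mul hq
  have := right_ne_zero_of_mul hy
  rw [show 2 * N = 2 * (N - k) + 2 * k by omega, pow_add r]
  field_simp

lemma balancedSum_eq_div (hr : r ≠ 0) (hq : qPochhammer (p ^ 2) (p ^ 2) N ≠ 0)
    (hrp : qPochhammer (r * p) (p ^ 2) N ≠ 0) (hrq : qPochhammer (r * p ^ 2) (p ^ 2) N ≠ 0) :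
    balancedSum p r y N = balancedNumerator p r y N /
      (qPochhammer (p ^ 2) (p ^ 2) N * qPochhammer (r * p) (p ^ 2) N *
        qPochhammer (r * p ^ 2) (p ^ 2) N * r ^ (2 * N)) := by
  rw [balancedSum, balancedNumerator, sum_div]
  refine sum_congr rfl fun k hk ↦ ?_
  have hkN := Nat.lt_succ_iff.1 (mem_range.1 hk)
  rw [← qPochhammer_mul_sub _ _ hkN] at hq hrp hrq
  rw [← qPochhammer_mul_sub (p ^ 2) _ hkN, ← qPochhammer_mul_sub (r * p) _ hkN,
    ← qPochhammer_mul_sub (r * p ^ 2) _ hkN]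
  have := right_ne_zero_of_mul hq
  have := right_ne_zero_of_mul hrp
  have := right_ne_zero_of_mul hrq
  rw [show 2 * N = 2 * (N - k) + 2 * k by omega, pow_add r]
  field_simp

lemma leftSum_sub_rightSum_eq_div (hr : r ≠ 0) (ha : 1 - r ^ 2 ≠ 0)
    (hq : qPochhammer (p ^ 2) (p ^ 2) N ≠ 0) (hrp : qPochhammer (r * p) p (2 * N) ≠ 0)
    (hy : qPochhammerPair (p ^ 2) (p ^ 2) y N ≠ 0) :
    leftSum p r y N - rightSum p r y N = differenceNumerator p r y N /
      ((1 - r ^ 2) * qPochhammer (p ^ 2) (p ^ 2) N * qPochhammer (r * p) p (2 * N) *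
        qPochhammerPair (p ^ 2) (p ^ 2) y N * r ^ (2 * N)) := by
  have factor : 1 - r ^ 2 = (1 - r) * (1 + r) := by ring
  have split : qPochhammer (r * p) p (2 * N) =
      qPochhammer (r * p) (p ^ 2) N * qPochhammer (r * p ^ 2) (p ^ 2) N := by
    rw [qPochhammer_two_mul, mul_assoc, sq]
  rw [split] at hrp
  rw [factor] at ha
  have h₁ := left_ne_zero_of_mul hrp
  have h₂ := right_ne_zero_of_mul hrp
  have h₃ := left_ne_zero_of_mul ha
  have h₄ := right_ne_zero_of_mul ha
  rw [leftSum_eq_div hr hq hy, rightSum, balancedSum_eq_div hr hq h₁ h₂, differenceNumerator,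
    qPochhammer_succ_left, split, factor]
  generalize 1 - r = b at *
  generalize 1 + r = c at *
  generalize qPochhammer (r * p) (p ^ 2) N = d at *
  generalize qPochhammer (r * p ^ 2) (p ^ 2) N = e at *
  field_simp

lemma differenceNumerator_eq_zero (hp : p ≠ 0) (hr : r ≠ 0)
    (hq : ∀ j, 1 - p ^ 2 * (p ^ 2) ^ j ≠ 0) (ha : ∀ j, 1 - r ^ 2 * (p ^ 2) ^ j ≠ 0) (N : ℕ) :
    differenceNumerator p r ((r * p ^ N) ^ 2 + ((r * p ^ N) ^ 2)⁻¹) N = 0 := by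
  have ha₀ : 1 - r ^ 2 ≠ 0 := by simpa using ha 0
  have hQ := qPochhammer_ne_zero hq N
  have hrp : qPochhammer (r * p) p (2 * N) ≠ 0 := qPochhammer_ne_zero (fun j ↦ by
    simpa [pow_succ', mul_assoc] using one_sub_mul_pow_ne_zero ha (j + 1) 0) _
  have hy : qPochhammerPair (p ^ 2) (p ^ 2) ((r * p ^ N) ^ 2 + ((r * p ^ N) ^ 2)⁻¹) N ≠ 0 := by
    have haQ := qPochhammer_ne_zero (x := r ^ 2 * p ^ 2) (q := p ^ 2) fun j ↦ by
      simpa only [pow_succ', mul_assoc] using ha (j + 1)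
    refine left_ne_zero_of_mul (b := qPochhammer (r ^ 2 * p ^ 2) (p ^ 2) N) ?_
    rw [qPochhammerPair_mul_qPochhammer_add hp hr]
    refine mul_ne_zero (fun h ↦ qPochhammer_ne_zero ha N ?_) (haQ _)
    rw [qPochhammer_sq_reflect hp hr, h, mul_zero]
  have h := leftSum_sub_rightSum_eq_div hr ha₀ hQ hrp hy
  rw [leftSum_eq_rightSum hp hr hq ha, sub_self, eq_comm, div_eq_zero_iff] at h
  exact h.resolve_right (by positivity)

end Numerators

section Divisibility

variable {R : Type*} [CommRing R] {p r : R}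

lemma coefficient_mul_pow {k k' : ℕ} (h : r * p ^ (k + k') = -1) :
    (-1) ^ k * (1 + r * (p ^ 2) ^ k) * ((-r ^ 2) ^ k * (p ^ 2) ^ k.choose 2) ^ 3 *
        (p ^ (k ^ 2 + 2 * k) * r ^ (2 * k')) * p ^ (k + k' + 4 * (k * k')) =
      (p ^ k' - p ^ k) * r ^ (2 * (k + k')) := by
  have power : r ^ (4 * k) * (p ^ (4 * k ^ 2) * p ^ (4 * (k * k'))) = 1 := by
    calc
      _ = ((r * p ^ (k + k')) ^ 4) ^ k := by ring
      _ = 1 := by rw [h, Even.neg_one_pow (by decide), one_pow]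
  have linear : r * (p ^ 2) ^ k * p ^ k' = -p ^ k := by
    linear_combination p ^ k * h
  have sign : ((-1 : R) ^ k) ^ 4 = 1 := by
    rw [← pow_mul', pow_mul, Even.neg_one_pow (by decide), one_pow]
  calc
    _ = ((-1) ^ k) ^ 4 * r ^ (6 * k) * ((p ^ 2) ^ k.choose 2 * p ^ k) ^ 3 * p ^ k ^ 2 *
        p ^ (4 * (k * k')) * r ^ (2 * k') * (p ^ k' + r * (p ^ 2) ^ k * p ^ k') := by
      rw [neg_pow]
      ring
    _ = r ^ (4 * k) * (p ^ (4 * k ^ 2) * p ^ (4 * (k * k'))) *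
        r ^ (2 * (k + k')) * (p ^ k' - p ^ k) := by
      rw [sq_pow_choose_two_mul_pow, sign, linear]
      ring
    _ = _ := by
      rw [power]
      ring

/-- The terms `k` and `N - k` cancel. -/
lemma two_mul_leftNumerator_eq_zero (hp : IsUnit p) {N : ℕ} (hw : r * p ^ N = -1) (y : R) :
    2 * leftNumerator p r y N = 0 := by
  rw [two_mul]
  nth_rw 2 [leftNumerator]
  rw [← sum_range_reflect, leftNumerator, ← sum_add_distrib]
  refine sum_eq_zero fun k hk ↦ ?_
  obtain ⟨k', rfl⟩ := Nat.exists_eq_add_of_le (Nat.lt_succ_iff.1 (mem_range.1 hk))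
  have inverse : r ^ 2 * (p ^ 2) ^ k' * (p ^ 2) ^ k = 1 := by
    linear_combination (r * p ^ (k + k') - 1) * hw
  have inverse' : r ^ 2 * (p ^ 2) ^ k * (p ^ 2) ^ k' = 1 := by
    rw [← inverse]
    ring
  have first := coefficient_mul_pow hw
  have second := coefficient_mul_pow (k := k') (k' := k) (by rw [add_comm, hw])
  rw [add_comm k' k, mul_comm k' k] at second
  rw [show k + k' + 1 - 1 - k = k' by omega, Nat.add_sub_cancel_left, Nat.add_sub_cancel,
    qPochhammer_reflect inverse, qPochhammer_reflect inverse', qPochhammerPair_reflect inverse,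
    qPochhammerPair_reflect inverse', mul_comm (p ^ 2), mul_comm (p ^ 2)]
  refine (hp.pow (k + k' + 4 * (k * k'))).mul_left_injective ?_
  simp only [zero_mul]
  linear_combination qPochhammer ((p ^ 2) ^ k * p ^ 2) (p ^ 2) k' *
    qPochhammer ((p ^ 2) ^ k' * p ^ 2) (p ^ 2) k *
    (qPochhammerPair ((p ^ 2) ^ k * p ^ 2) (p ^ 2) y k' *
      qPochhammerPair ((p ^ 2) ^ k' * p ^ 2) (p ^ 2) y k) * (first + second)

lemma one_add_dvd_leftNumerator (hp : IsUnit p) (h2 : IsUnit (2 : R)) (r y : R) (N : ℕ) :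
    1 + r * p ^ N ∣ leftNumerator p r y N := by
  rw [← h2.dvd_mul_left, ← Ideal.mem_span_singleton, ← Ideal.Quotient.eq_zero_iff_mem, map_mul,
    map_leftNumerator, map_ofNat]
  refine two_mul_leftNumerator_eq_zero (hp.map _) ?_ _
  rw [eq_neg_iff_add_eq_zero, add_comm, ← map_pow, ← map_mul,
    ← map_one (Ideal.Quotient.mk _), ← map_add, Ideal.Quotient.eq_zero_iff_mem]
  exact Ideal.mem_span_singleton_self _

lemma one_sub_sq_dvd_differenceNumerator (hp : IsUnit p) (h2 : IsUnit (2 : R)) (r y : R) (N : ℕ) :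
    1 - (r * p ^ N) ^ 2 ∣ differenceNumerator p r y N := by
  have hN : N ∈ range (2 * N + 1) := mem_range.2 (by omega)
  refine dvd_sub ?_ (((Dvd.intro_left _ rfl).mul_right _).mul_right _ |>.mul_right _)
  rw [show 1 - (r * p ^ N) ^ 2 = (1 - r * p ^ N) * (1 + r * p ^ N) by ring]
  exact mul_dvd_mul (dvd_prod_of_mem (fun j ↦ 1 - r * p ^ j) hN)
    (one_add_dvd_leftNumerator hp h2 r y N)

/-- `F` is a polynomial in `z + 1/z` which vanishes at `z = w²`; specializing to `z = 1` gains the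
factor `2 - w² - w⁻²`, that is, `(1 - w²)²` up to a unit. -/
lemma mul_one_sub_sq_sq_dvd_eval_two [IsDomain R] {F : R[X]} {c w v : R} (hc : c ≠ 0)
    (hdvd : C c ∣ F) (hwv : w * v = 1) (hF : F.eval (w ^ 2 + v ^ 2) = 0) :
    c * (1 - w ^ 2) ^ 2 ∣ F.eval 2 := by
  obtain ⟨G, rfl⟩ := hdvd
  rw [eval_mul, eval_C] at hF ⊢
  have hG := (mul_eq_zero.1 hF).resolve_left hc
  have h := sub_dvd_eval_sub 2 (w ^ 2 + v ^ 2) G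
  rw [hG, sub_zero] at h
  refine mul_dvd_mul_left _ (dvd_trans ⟨-v ^ 2, ?_⟩ h)
  linear_combination ((w * v + 1) * (w ^ 2 - 2)) * hwv

theorem one_sub_sq_pow_three_dvd_differenceNumerator [IsDomain R] (hp : IsUnit p) (hr : IsUnit r)
    (h2 : IsUnit (2 : R)) (hq : ∀ j, 1 - p ^ 2 * (p ^ 2) ^ j ≠ 0)
    (ha : ∀ j, 1 - r ^ 2 * (p ^ 2) ^ j ≠ 0) (N : ℕ) :
    (1 - (r * p ^ N) ^ 2) ^ 3 ∣ differenceNumerator p r 2 N := by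
  have eval : ∀ y, (differenceNumerator (C p) (C r) X N).eval y = differenceNumerator p r y N :=
    fun y ↦ by simpa using map_differenceNumerator (evalRingHom y) (C p) (C r) X N
  obtain ⟨v, hv⟩ := (hr.mul (hp.pow N)).exists_right_inv
  have hw : 1 - (r * p ^ N) ^ 2 ≠ 0 := by
    have := ha N
    rwa [show r ^ 2 * (p ^ 2) ^ N = (r * p ^ N) ^ 2 by ring] at this
  have hdvd : C (1 - (r * p ^ N) ^ 2) ∣ differenceNumerator (C p) (C r) X N := by
    have h2' : IsUnit (2 : R[X]) := by
      have := h2.map (C : R →+* R[X])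
      rwa [map_ofNat] at this
    simpa using one_sub_sq_dvd_differenceNumerator (hp.map C) h2' (C r) X N
  have root : (differenceNumerator (C p) (C r) X N).eval ((r * p ^ N) ^ 2 + v ^ 2) = 0 := by
    set f := algebraMap R (FractionRing R)
    have hf : Function.Injective f := IsFractionRing.injective R (FractionRing R)
    have map_ne {x q : R} (h : ∀ j, 1 - x ^ 2 * (q ^ 2) ^ j ≠ 0) (j : ℕ) :
        1 - f x ^ 2 * (f q ^ 2) ^ j ≠ 0 := by
      simpa using (map_ne_zero_iff f hf).2 (h j)
    have hfv : f v = (f r * f p ^ N)⁻¹ := eq_inv_of_mul_eq_one_right <| by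
      rw [← map_pow, ← map_mul, ← map_mul, hv, map_one]
    rw [eval, ← map_eq_zero_iff f hf, map_differenceNumerator, map_add, map_pow, map_pow, hfv,
      inv_pow, map_mul, map_pow]
    exact differenceNumerator_eq_zero (hp.map f).ne_zero (hr.map f).ne_zero (map_ne hq)
      (map_ne ha) N
  rw [pow_succ', ← eval]
  exact mul_one_sub_sq_sq_dvd_eval_two hw hdvd hv root

end Divisibility

section Localization

variable {K : Type*} [Field K]

/-- The localization of `K[X]` at the polynomials coprime to `P`, inside the rational functions:
divisibility by powers of `P` in it is the congruence modulo powers of `P`. -/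
def localizationAt (P : K[X]) : Subring (RatFunc K) where
  carrier := {f | IsCoprime f.denom P}
  mul_mem' hf hg := (hf.mul_left hg).of_isCoprime_of_dvd_left (RatFunc.denom_mul_dvd _ _)
  one_mem' := by simpa using isCoprime_one_left
  add_mem' hf hg := (hf.mul_left hg).of_isCoprime_of_dvd_left (RatFunc.denom_add_dvd _ _)
  zero_mem' := by simpa using isCoprime_one_left
  neg_mem' {f} hf := by
    change IsCoprime (-f).denom P
    rw [neg_eq_neg_one_mul]
    refine IsCoprime.of_isCoprime_of_dvd_left hf ((RatFunc.denom_mul_dvd _ _).trans ?_)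
    rw [← map_one (algebraMap K[X] (RatFunc K)), ← map_neg, RatFunc.denom_algebraMap, one_mul]

lemma mem_localizationAt {P : K[X]} {f : RatFunc K} :
    f ∈ localizationAt P ↔ IsCoprime f.denom P :=
  Iff.rfl

lemma algebraMap_mem_localizationAt (P g : K[X]) :
    algebraMap K[X] (RatFunc K) g ∈ localizationAt P := by
  rw [mem_localizationAt, RatFunc.denom_algebraMap]
  exact isCoprime_one_left

lemma inv_algebraMap_mem_localizationAt {P h : K[X]} (hh : IsCoprime h P) :
    (algebraMap K[X] (RatFunc K) h)⁻¹ ∈ localizationAt P := by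
  refine mem_localizationAt.2 (hh.of_isCoprime_of_dvd_left ?_)
  simpa using RatFunc.denom_div_dvd (1 : K[X]) h

lemma dvd_num_of_eq_algebraMap_mul {P D : K[X]} {m : ℕ} (hD : D ∣ P ^ m) {f b : RatFunc K}
    (hb : b ∈ localizationAt P) (hf : f = algebraMap K[X] (RatFunc K) D * b) : D ∣ f.num := by
  have hcop : IsCoprime D b.denom :=
    (mem_localizationAt.1 hb).pow_right.symm.of_isCoprime_of_dvd_left hD
  refine hcop.dvd_of_dvd_mul_right ⟨b.num * f.denom, ?_⟩
  rw [← mul_assoc, RatFunc.num_mul_eq_mul_denom_iff b.denom_ne_zero, hf, map_mul, mul_div_assoc,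
    RatFunc.num_div_denom]

lemma X_zpow_mem_localizationAt {P : K[X]} (hP : IsCoprime X P) (m : ℤ) :
    (RatFunc.X ^ m : RatFunc K) ∈ localizationAt P := by
  obtain ⟨k, rfl | rfl⟩ := m.eq_nat_or_neg
  · simpa using algebraMap_mem_localizationAt P (X ^ k)
  · simpa using inv_algebraMap_mem_localizationAt (hP.pow_left (m := k))

lemma inv_one_sub_X_zpow_mem_localizationAt {P : K[X]} (hP : IsCoprime X P) {m : ℤ}
    (hm : IsCoprime (X ^ m.natAbs - 1) P) :
    (1 - RatFunc.X ^ m : RatFunc K)⁻¹ ∈ localizationAt P := by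
  have hnat : (1 - RatFunc.X ^ m.natAbs : RatFunc K)⁻¹ ∈ localizationAt P := by
    simpa using inv_algebraMap_mem_localizationAt hm.neg_left
  obtain h | h := m.natAbs_eq
  · rwa [h, zpow_natCast]
  · have hX : (RatFunc.X ^ m.natAbs : RatFunc K) ≠ 0 := pow_ne_zero _ RatFunc.X_ne_zero
    have hflip : (1 - RatFunc.X ^ m : RatFunc K) =
        -(RatFunc.X ^ m * (1 - RatFunc.X ^ m.natAbs)) := by
      rw [mul_sub, h, Int.natAbs_neg, Int.natAbs_natCast, zpow_neg, zpow_natCast,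
        inv_mul_cancel₀ hX]
      ring
    rw [hflip, inv_neg, mul_inv, ← zpow_neg]
    exact neg_mem (mul_mem (X_zpow_mem_localizationAt hP _) hnat)

lemma one_sub_X_zpow_ne_zero {m : ℤ} (hm : m ≠ 0) : (1 - RatFunc.X ^ m : RatFunc K) ≠ 0 := by
  have hnat : (RatFunc.X ^ m.natAbs : RatFunc K) ≠ 1 := by
    rw [← RatFunc.algebraMap_X, ← map_pow, ← map_one (algebraMap K[X] (RatFunc K)),
      (RatFunc.algebraMap_injective K).ne_iff, ← sub_ne_zero, ← C_1]
    exact X_pow_sub_C_ne_zero (Int.natAbs_pos.2 hm) 1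
  rw [sub_ne_zero, ne_comm]
  obtain h | h := m.natAbs_eq
  · rwa [h, zpow_natCast]
  · rwa [h, zpow_neg, zpow_natCast, Ne, inv_eq_one]

lemma inv_qPochhammer_mem {A : Subring K} {x q : K} {k : ℕ}
    (h : ∀ j < k, (1 - x * q ^ j)⁻¹ ∈ A) : (qPochhammer x q k)⁻¹ ∈ A := by
  rw [qPochhammer, ← prod_inv_distrib]
  exact prod_mem fun j hj ↦ h j (mem_range.1 hj)

lemma mul_inv_qPochhammer_mem {A : Subring K} {x q : K} {i k : ℕ} (hi : i < k)
    (hi₀ : 1 - x * q ^ i ≠ 0) (h : ∀ j < k, j ≠ i → (1 - x * q ^ j)⁻¹ ∈ A) :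
    (1 - x * q ^ i) * (qPochhammer x q k)⁻¹ ∈ A := by
  rw [qPochhammer, ← mul_prod_erase _ _ (mem_range.2 hi), mul_inv, mul_inv_cancel_left₀ hi₀,
    ← prod_inv_distrib]
  exact prod_mem fun j hj ↦ h j (mem_range.1 (mem_of_mem_erase hj)) (ne_of_mem_erase hj)

end Localization

section Cyclotomic

lemma isCoprime_X_cyclotomic (n : ℕ) : IsCoprime (X : ℚ[X]) (cyclotomic n ℚ) := by
  obtain rfl | hn := n.eq_zero_or_pos
  · simpa using isCoprime_one_right
  have h : IsCoprime (X : ℚ[X]) (X ^ n - 1) :=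
    ⟨X ^ (n - 1), -1, by rw [pow_sub_one_mul hn.ne']; ring⟩
  exact h.of_isCoprime_of_dvd_right (cyclotomic.dvd_X_pow_sub_one n ℚ)

lemma isCoprime_X_pow_sub_one_cyclotomic {n m : ℕ} (hm : ¬ n ∣ m) :
    IsCoprime (X ^ m - 1 : ℚ[X]) (cyclotomic n ℚ) := by
  have hm₀ : 0 < m := Nat.pos_of_ne_zero fun h ↦ hm (h ▸ dvd_zero n)
  rw [← prod_cyclotomic_eq_X_pow_sub_one hm₀]
  exact IsCoprime.prod_left fun d hd ↦
    cyclotomic.isCoprime_rat fun h ↦ hm (h ▸ Nat.dvd_of_mem_divisors hd)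

lemma isCoprime_X_cyclotomic_mul_comp_neg (n : ℕ) :
    IsCoprime (X : ℚ[X]) (cyclotomic n ℚ * (cyclotomic n ℚ).comp (-X)) := by
  have h := (isCoprime_X_cyclotomic n).map (compRingHom (-X : ℚ[X]))
  rw [coe_compRingHom_apply, coe_compRingHom_apply, X_comp] at h
  exact (isCoprime_X_cyclotomic n).mul_right ((IsCoprime.neg_left_iff _ _).1 h)

lemma isCoprime_X_pow_sub_one_cyclotomic_mul_comp_neg {n m : ℕ} (hn : Odd n) (hm : ¬ n ∣ m) :
    IsCoprime (X ^ m - 1 : ℚ[X]) (cyclotomic n ℚ * (cyclotomic n ℚ).comp (-X)) := by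
  have hm₂ : ¬ n ∣ 2 * m := fun h ↦ hm (hn.coprime_two_right.dvd_of_dvd_mul_left h)
  have h := (isCoprime_X_pow_sub_one_cyclotomic hm₂).map (compRingHom (-X : ℚ[X]))
  simp only [coe_compRingHom_apply, sub_comp, pow_comp, X_comp, one_comp, pow_mul, neg_sq] at h
  rw [← pow_mul] at h
  exact (isCoprime_X_pow_sub_one_cyclotomic hm).mul_right
    (h.of_isCoprime_of_dvd_left ⟨X ^ m + 1, by ring⟩)

lemma cyclotomic_comp_neg_X_dvd_X_pow_add_one {n : ℕ} (hn : Odd n) :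
    (cyclotomic n ℚ).comp (-X) ∣ X ^ n + 1 := by
  have h := map_dvd (compRingHom (-X : ℚ[X])) (cyclotomic.dvd_X_pow_sub_one n ℚ)
  simp only [coe_compRingHom_apply, sub_comp, pow_comp, X_comp, one_comp, hn.neg_pow] at h
  rwa [← dvd_neg, neg_add']

end Cyclotomic

section Congruence

lemma exists_mem_differenceNumerator_eq_mul {K : Type*} [Field K] {A : Subring K} {p r : K}
    (hp : p ∈ A) (hp' : p⁻¹ ∈ A) (hr : r ∈ A) (hr' : r⁻¹ ∈ A) (h2' : (2 : K)⁻¹ ∈ A)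
    (hp₀ : p ≠ 0) (hr₀ : r ≠ 0) (h2₀ : (2 : K) ≠ 0) (hq : ∀ j, 1 - p ^ 2 * (p ^ 2) ^ j ≠ 0)
    (ha : ∀ j, 1 - r ^ 2 * (p ^ 2) ^ j ≠ 0) (N : ℕ) :
    ∃ b ∈ A, differenceNumerator p r 2 N = (1 - (r * p ^ N) ^ 2) ^ 3 * b := by
  have isUnit {x : A} (hx' : (x : K)⁻¹ ∈ A) (hx₀ : (x : K) ≠ 0) : IsUnit x :=
    IsUnit.of_mul_eq_one ⟨_, hx'⟩ (Subtype.ext (mul_inv_cancel₀ hx₀))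
  have ne_zero {x q : A} (h : ∀ j, 1 - (x : K) ^ 2 * ((q : K) ^ 2) ^ j ≠ 0) (j : ℕ) :
      1 - x ^ 2 * (q ^ 2) ^ j ≠ 0 :=
    fun h₀ ↦ h j (by simpa using congrArg A.subtype h₀)
  obtain ⟨b, hb⟩ := one_sub_sq_pow_three_dvd_differenceNumerator (p := (⟨p, hp⟩ : A))
    (r := ⟨r, hr⟩) (isUnit hp' hp₀) (isUnit hr' hr₀) (isUnit h2' h2₀) (ne_zero hq) (ne_zero ha) N
  refine ⟨b, b.2, ?_⟩
  have h := congrArg A.subtype hb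
  rw [map_differenceNumerator, map_ofNat] at h
  simpa using h

variable {n N : ℕ} {s : ℤ}

lemma not_dvd_six_mul_succ (hodd : Odd n) (h3 : ¬ 3 ∣ n) {j : ℕ} (hj : j + 1 < n) :
    ¬ n ∣ 6 * (j + 1) := by
  have hcop : n.Coprime (2 * 3) :=
    hodd.coprime_two_right.mul_right ((Nat.prime_three.coprime_iff_not_dvd.2 h3).symm)
  exact fun h ↦ Nat.not_dvd_of_pos_of_lt j.succ_pos hj (hcop.dvd_of_dvd_mul_left h)

lemma not_dvd_two_mul (hodd : Odd n) (h3 : ¬ 3 ∣ s) (hn : (n : ℤ) = s + 3 * N)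
    (hs : -2 * (n : ℤ) < s) (hN : N ≠ 0) : ¬ (n : ℤ) ∣ 2 * s := by
  intro h
  have hcop : IsCoprime (n : ℤ) 2 := Nat.isCoprime_iff_coprime.2 hodd.coprime_two_right
  obtain ⟨c, hc⟩ := hcop.dvd_of_dvd_mul_left h
  have hN' : 0 < (N : ℤ) := by omega
  have hc₁ : -2 < c := by nlinarith
  have hc₂ : c < 1 := by nlinarith
  interval_cases c <;> omega

lemma not_dvd_add_three_mul (h3 : ¬ 3 ∣ s) (hn : (n : ℤ) = s + 3 * N) (hs : -2 * (n : ℤ) < s)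
    {i : ℕ} (hi : i ≤ 2 * N) (hiN : i ≠ N) : ¬ (n : ℤ) ∣ s + 3 * i := by
  rintro ⟨c, hc⟩
  have hc₁ : -2 < c := by nlinarith
  have hc₂ : c < 4 := by nlinarith
  interval_cases c <;> omega

lemma X_zpow_pow (a : ℤ) (j : ℕ) : ((RatFunc.X ^ a) ^ j : RatFunc ℚ) = RatFunc.X ^ (a * j) := by
  rw [zpow_mul, zpow_natCast]

lemma X_zpow_sq (a : ℤ) : ((RatFunc.X ^ a) ^ 2 : RatFunc ℚ) = RatFunc.X ^ (2 * a) := by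
  rw [X_zpow_pow, mul_comm, Nat.cast_ofNat]

lemma X_zpow_mul_X_zpow_pow (a b : ℤ) (j : ℕ) :
    (RatFunc.X ^ a * (RatFunc.X ^ b) ^ j : RatFunc ℚ) = RatFunc.X ^ (a + b * j) := by
  rw [zpow_add₀ RatFunc.X_ne_zero, X_zpow_pow]

/-- The rational functions without a pole at the zeros of `Φ_n(q)` and `Φ_n(-q)`; congruences
modulo `Φ_n(-q)^3 Φ_n(q)^2` are divisibilities in this ring. -/
noncomputable def cyclotomicLocalization (n : ℕ) : Subring (RatFunc ℚ) :=
  localizationAt (cyclotomic n ℚ * (cyclotomic n ℚ).comp (-X))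

lemma X_zpow_mem_cyclotomicLocalization (n : ℕ) (m : ℤ) :
    RatFunc.X ^ m ∈ cyclotomicLocalization n :=
  X_zpow_mem_localizationAt (isCoprime_X_cyclotomic_mul_comp_neg n) m

lemma inv_one_sub_X_zpow_mem_cyclotomicLocalization (hodd : Odd n) {m : ℤ} (hm : ¬ (n : ℤ) ∣ m) :
    (1 - RatFunc.X ^ m)⁻¹ ∈ cyclotomicLocalization n :=
  inv_one_sub_X_zpow_mem_localizationAt (isCoprime_X_cyclotomic_mul_comp_neg n) <|
    isCoprime_X_pow_sub_one_cyclotomic_mul_comp_neg hodd (mt Int.natCast_dvd.2 hm)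

lemma one_sub_cube_sq_mul_pow (j : ℕ) :
    (1 - (RatFunc.X ^ (3 : ℤ)) ^ 2 * ((RatFunc.X ^ (3 : ℤ)) ^ 2) ^ j : RatFunc ℚ) =
      1 - RatFunc.X ^ (↑(6 * (j + 1)) : ℤ) := by
  rw [← pow_succ', ← pow_mul, X_zpow_pow]
  congr 2
  push_cast
  ring

lemma one_sub_mul_cube_mul_pow (s : ℤ) (j : ℕ) :
    (1 - RatFunc.X ^ s * RatFunc.X ^ (3 : ℤ) * (RatFunc.X ^ (3 : ℤ)) ^ j : RatFunc ℚ) =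
      1 - RatFunc.X ^ (s + 3 * ↑(j + 1)) := by
  rw [mul_assoc, ← pow_succ', X_zpow_mul_X_zpow_pow]

lemma one_sub_sq_mul_cube_sq_pow (s : ℤ) (j : ℕ) :
    (1 - (RatFunc.X ^ s) ^ 2 * ((RatFunc.X ^ (3 : ℤ)) ^ 2) ^ j : RatFunc ℚ) =
      1 - RatFunc.X ^ (2 * s + 6 * j) := by
  rw [X_zpow_pow, X_zpow_pow, X_zpow_mul_X_zpow_pow]
  congr 2
  push_cast
  ring

lemma one_sub_X_pow_mul_inv_denominator_mem (hodd : Odd n) (h3 : ¬ 3 ∣ s)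
    (hn : (n : ℤ) = s + 3 * N) (hs : -2 * (n : ℤ) < s) (hN : N ≠ 0) :
    (1 - RatFunc.X ^ n) * ((1 - (RatFunc.X ^ s) ^ 2) *
      qPochhammer ((RatFunc.X ^ (3 : ℤ)) ^ 2) ((RatFunc.X ^ (3 : ℤ)) ^ 2) N *
      qPochhammer (RatFunc.X ^ s * RatFunc.X ^ (3 : ℤ)) (RatFunc.X ^ (3 : ℤ)) (2 * N) *
      qPochhammerPair ((RatFunc.X ^ (3 : ℤ)) ^ 2) ((RatFunc.X ^ (3 : ℤ)) ^ 2) 2 N *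
      (RatFunc.X ^ s) ^ (2 * N))⁻¹ ∈ cyclotomicLocalization n := by
  have inv_mem {m : ℤ} (hm : ¬ (n : ℤ) ∣ m) := inv_one_sub_X_zpow_mem_cyclotomicLocalization hodd hm
  have hr : (1 - (RatFunc.X ^ s) ^ 2)⁻¹ ∈ cyclotomicLocalization n := by
    rw [X_zpow_pow]
    exact inv_mem (mul_comm s _ ▸ not_dvd_two_mul hodd h3 hn hs hN)
  have hq : (qPochhammer ((RatFunc.X ^ (3 : ℤ)) ^ 2) ((RatFunc.X ^ (3 : ℤ)) ^ 2) N)⁻¹ ∈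
      cyclotomicLocalization n :=
    inv_qPochhammer_mem fun j hj ↦ by
      rw [one_sub_cube_sq_mul_pow]
      exact inv_mem (mt Int.natCast_dvd_natCast.1
        (not_dvd_six_mul_succ hodd (by omega) (by omega)))
  have hn' : s + 3 * ↑(N - 1 + 1) = (n : ℤ) := by rw [hn, Nat.sub_one_add_one hN]
  have hrp : (1 - RatFunc.X ^ n) * (qPochhammer (RatFunc.X ^ s * RatFunc.X ^ (3 : ℤ))
      (RatFunc.X ^ (3 : ℤ)) (2 * N))⁻¹ ∈ cyclotomicLocalization n := by
    have hfactor := one_sub_mul_cube_mul_pow s (N - 1)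
    rw [hn', zpow_natCast] at hfactor
    rw [← hfactor]
    refine mul_inv_qPochhammer_mem (by omega) ?_ fun j hj hjN ↦ ?_
    · rw [one_sub_mul_cube_mul_pow, hn']
      exact one_sub_X_zpow_ne_zero (by omega)
    · rw [one_sub_mul_cube_mul_pow]
      exact inv_mem (not_dvd_add_three_mul h3 hn hs (by omega) (by omega))
  have hpow : ((RatFunc.X ^ s) ^ (2 * N))⁻¹ ∈ cyclotomicLocalization n := by
    rw [X_zpow_pow, ← zpow_neg]
    exact X_zpow_mem_cyclotomicLocalization n _
  convert mul_mem (mul_mem (mul_mem hrp hr) (mul_mem hq (pow_mem hq 2))) hpow using 1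
  rw [qPochhammerPair_two]
  simp only [mul_inv, inv_pow]
  ring

lemma exists_mem_leftSum_sub_rightSum_eq_mul (hodd : Odd n) (h3 : ¬ 3 ∣ s)
    (hn : (n : ℤ) = s + 3 * N) (hs : -2 * (n : ℤ) < s) (hN : N ≠ 0) :
    ∃ b ∈ cyclotomicLocalization n,
      leftSum (RatFunc.X ^ (3 : ℤ)) (RatFunc.X ^ s) 2 N -
        rightSum (RatFunc.X ^ (3 : ℤ)) (RatFunc.X ^ s) 2 N =
      (1 + RatFunc.X ^ n) ^ 3 * (1 - RatFunc.X ^ n) ^ 2 * b := by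
  have hp₀ : (RatFunc.X ^ (3 : ℤ) : RatFunc ℚ) ≠ 0 := zpow_ne_zero _ RatFunc.X_ne_zero
  have hr₀ : (RatFunc.X ^ s : RatFunc ℚ) ≠ 0 := zpow_ne_zero _ RatFunc.X_ne_zero
  have hq₁ (j : ℕ) :
      (1 - (RatFunc.X ^ (3 : ℤ)) ^ 2 * ((RatFunc.X ^ (3 : ℤ)) ^ 2) ^ j : RatFunc ℚ) ≠ 0 := by
    rw [one_sub_cube_sq_mul_pow]
    exact one_sub_X_zpow_ne_zero (by omega)
  have ha₁ (j : ℕ) :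
      (1 - (RatFunc.X ^ s) ^ 2 * ((RatFunc.X ^ (3 : ℤ)) ^ 2) ^ j : RatFunc ℚ) ≠ 0 := by
    rw [one_sub_sq_mul_cube_sq_pow]
    exact one_sub_X_zpow_ne_zero (by omega)
  have hrp₁ (j : ℕ) :
      (1 - RatFunc.X ^ s * RatFunc.X ^ (3 : ℤ) * (RatFunc.X ^ (3 : ℤ)) ^ j : RatFunc ℚ) ≠ 0 := by
    rw [one_sub_mul_cube_mul_pow]
    exact one_sub_X_zpow_ne_zero (by omega)
  have hq := qPochhammer_ne_zero hq₁ N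
  have hpair : qPochhammerPair ((RatFunc.X ^ (3 : ℤ)) ^ 2) ((RatFunc.X ^ (3 : ℤ)) ^ 2)
      (2 : RatFunc ℚ) N ≠ 0 := by
    rw [qPochhammerPair_two]
    exact pow_ne_zero 2 hq
  have hw : (RatFunc.X ^ s * (RatFunc.X ^ (3 : ℤ)) ^ N : RatFunc ℚ) = RatFunc.X ^ n := by
    rw [X_zpow_mul_X_zpow_pow, ← hn, zpow_natCast]
  have two_inv_mem : (2 : RatFunc ℚ)⁻¹ ∈ cyclotomicLocalization n := by
    rw [cyclotomicLocalization]
    simpa using algebraMap_mem_localizationAt _ (C (2⁻¹ : ℚ))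
  have X_mem := X_zpow_mem_cyclotomicLocalization n
  obtain ⟨b, hb, hbeq⟩ := exists_mem_differenceNumerator_eq_mul (X_mem 3)
    (by simpa only [zpow_neg] using X_mem (-3)) (X_mem s)
    (by simpa only [zpow_neg] using X_mem (-s)) two_inv_mem hp₀ hr₀ two_ne_zero hq₁ ha₁ N
  refine ⟨_, mul_mem hb (one_sub_X_pow_mul_inv_denominator_mem hodd h3 hn hs hN), ?_⟩
  rw [leftSum_sub_rightSum_eq_div hr₀ (by simpa using ha₁ 0) hq (qPochhammer_ne_zero hrp₁ _) hpair,
    hbeq, hw, div_eq_mul_inv]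
  ring

end Congruence

section SpecializedSums

variable {n N : ℕ} {s : ℤ}

lemma leftSum_zero_eq_rightSum_zero {K : Type*} [Field K] {r : K} (p y : K) (hr : 1 - r ^ 2 ≠ 0) :
    leftSum p r y 0 = rightSum p r y 0 := by
  have hr' : 1 + r ≠ 0 := fun h ↦ hr (by linear_combination (1 - r) * h)
  simp [leftSum, rightSum, balancedSum, qPochhammerPair, hr, hr']

lemma dvd_num_leftSum_sub_rightSum (hodd : Odd n) (h3 : ¬ 3 ∣ s) (hn : (n : ℤ) = s + 3 * N)
    (hs : -2 * (n : ℤ) < s) :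
    (cyclotomic n ℚ).comp (-X) ^ 3 * cyclotomic n ℚ ^ 2 ∣
      (leftSum (RatFunc.X ^ (3 : ℤ)) (RatFunc.X ^ s) 2 N -
        rightSum (RatFunc.X ^ (3 : ℤ)) (RatFunc.X ^ s) 2 N).num := by
  obtain rfl | hN := eq_or_ne N 0
  · have hr : (1 - (RatFunc.X ^ s) ^ 2 : RatFunc ℚ) ≠ 0 := by
      rw [X_zpow_pow]
      exact one_sub_X_zpow_ne_zero (by omega)
    rw [leftSum_zero_eq_rightSum_zero _ _ hr, sub_self, RatFunc.num_zero]
    exact dvd_zero _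
  obtain ⟨b, hb, hbeq⟩ := exists_mem_leftSum_sub_rightSum_eq_mul hodd h3 hn hs hN
  have hpow : (cyclotomic n ℚ).comp (-X) ^ 3 * cyclotomic n ℚ ^ 2 ∣
      (cyclotomic n ℚ * (cyclotomic n ℚ).comp (-X)) ^ 3 := by
    rw [mul_pow, mul_comm]
    exact mul_dvd_mul_right (pow_dvd_pow _ (by norm_num)) _
  obtain ⟨g, hg⟩ : (cyclotomic n ℚ).comp (-X) ^ 3 * cyclotomic n ℚ ^ 2 ∣
      (X ^ n + 1) ^ 3 * (X ^ n - 1) ^ 2 :=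
    mul_dvd_mul (pow_dvd_pow_of_dvd (cyclotomic_comp_neg_X_dvd_X_pow_add_one hodd) 3)
      (pow_dvd_pow_of_dvd (cyclotomic.dvd_X_pow_sub_one n ℚ) 2)
  have hgeq := congrArg (algebraMap ℚ[X] (RatFunc ℚ)) hg
  refine dvd_num_of_eq_algebraMap_mul hpow (mul_mem (algebraMap_mem_localizationAt _ g) hb) ?_
  rw [hbeq, ← mul_assoc, ← map_mul, ← hgeq]
  simp only [map_mul, map_pow, map_add, map_sub, map_one, RatFunc.algebraMap_X]
  ring

lemma qPoch_eq_qPochhammer (x q : RatFunc ℚ) (k : ℕ) : qPoch x q k = qPochhammer x q k :=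
  rfl

lemma sum_eq_leftSum (s : ℤ) (N : ℕ) :
    ∑ k ∈ range (N + 1), (-1 : RatFunc ℚ) ^ k *
        ((1 + RatFunc.X ^ (6 * (k : ℤ) + s)) *
          qPoch (RatFunc.X ^ (2 * s)) (RatFunc.X ^ (6 : ℤ)) k ^ 3) /
        ((1 + RatFunc.X ^ s) * qPoch (RatFunc.X ^ (6 : ℤ)) (RatFunc.X ^ (6 : ℤ)) k ^ 3) *
        RatFunc.X ^ (3 * (k : ℤ) ^ 2 + 2 * (k : ℤ) * (3 - s)) =
      leftSum (RatFunc.X ^ (3 : ℤ)) (RatFunc.X ^ s) 2 N := by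
  have hp : ((RatFunc.X ^ (3 : ℤ)) ^ 2 : RatFunc ℚ) = RatFunc.X ^ (6 : ℤ) := X_zpow_sq 3
  refine sum_congr rfl fun k _ ↦ ?_
  have hexp : (RatFunc.X ^ (3 * (k : ℤ) ^ 2 + 2 * (k : ℤ) * (3 - s)) : RatFunc ℚ) =
      (RatFunc.X ^ (3 : ℤ)) ^ (k ^ 2 + 2 * k) / (RatFunc.X ^ s) ^ (2 * k) := by
    rw [X_zpow_pow, X_zpow_pow, ← zpow_sub₀ RatFunc.X_ne_zero]
    congr 1
    push_cast
    ring
  rw [hexp, hp, X_zpow_sq s, X_zpow_mul_X_zpow_pow, qPochhammerPair_two, qPochhammerPair_two,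
    add_comm s]
  simp only [qPoch_eq_qPochhammer, ← pow_succ']

lemma qInt_div_qInt (n s : ℤ) :
    qInt (RatFunc.X ^ (2 : ℤ)) n / qInt (RatFunc.X ^ (2 : ℤ)) s =
      (1 - RatFunc.X ^ (2 * n)) / (1 - RatFunc.X ^ (2 * s)) := by
  rw [qInt, qInt, div_div_div_cancel_right₀ (one_sub_X_zpow_ne_zero two_ne_zero), zpow_mul,
    zpow_mul]

lemma sum_eq_rightSum (hn : (n : ℤ) = s + 3 * N) :
    (-1 : RatFunc ℚ) ^ N * (qInt (RatFunc.X ^ (2 : ℤ)) n / qInt (RatFunc.X ^ (2 : ℤ)) s) *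
        RatFunc.X ^ (((n : ℤ) - s) * ((n : ℤ) + s - 3) / 3) *
        ∑ k ∈ range (N + 1),
          qPoch (RatFunc.X ^ (2 * s)) (RatFunc.X ^ (6 : ℤ)) k ^ 2 *
            qPoch (RatFunc.X ^ (3 : ℤ)) (RatFunc.X ^ (6 : ℤ)) k /
            (qPoch (RatFunc.X ^ (6 : ℤ)) (RatFunc.X ^ (6 : ℤ)) k *
              qPoch (RatFunc.X ^ (3 + s)) (RatFunc.X ^ (6 : ℤ)) k *
              qPoch (RatFunc.X ^ (6 + s)) (RatFunc.X ^ (6 : ℤ)) k) *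
            RatFunc.X ^ (2 * (k : ℤ) * (3 - s)) =
      rightSum (RatFunc.X ^ (3 : ℤ)) (RatFunc.X ^ s) 2 N := by
  have hp : ((RatFunc.X ^ (3 : ℤ)) ^ 2 : RatFunc ℚ) = RatFunc.X ^ (6 : ℤ) := X_zpow_sq 3
  have hw : ((RatFunc.X ^ s * (RatFunc.X ^ (3 : ℤ)) ^ N) ^ 2 : RatFunc ℚ) =
      RatFunc.X ^ (2 * (n : ℤ)) := by
    rw [X_zpow_mul_X_zpow_pow, ← hn, X_zpow_sq]
  have hexp : (RatFunc.X ^ (((n : ℤ) - s) * ((n : ℤ) + s - 3) / 3) : RatFunc ℚ) =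
      (RatFunc.X ^ (6 : ℤ)) ^ N.choose 2 * (RatFunc.X ^ s) ^ (2 * N) := by
    have hchoose : 2 * ((N.choose 2 : ℕ) : ℤ) = N * (N - 1) := by
      qify
      rw [Nat.cast_choose_two]
      ring
    have hdiv : ((n : ℤ) - s) * ((n : ℤ) + s - 3) / 3 = s * ↑(2 * N) + 6 * (N.choose 2 : ℕ) := by
      refine Int.ediv_eq_of_eq_mul_right three_ne_zero ?_
      rw [hn]
      push_cast
      linear_combination (-9) * hchoose
    rw [hdiv, X_zpow_pow s, mul_comm ((RatFunc.X ^ (6 : ℤ)) ^ _), X_zpow_mul_X_zpow_pow]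
  rw [rightSum, balancedSum, qInt_div_qInt, hexp, hp, X_zpow_sq s, hw]
  congr 1
  refine sum_congr rfl fun k _ ↦ ?_
  have hexp' : (RatFunc.X ^ (2 * (k : ℤ) * (3 - s)) : RatFunc ℚ) =
      (RatFunc.X ^ (3 : ℤ)) ^ (2 * k) / (RatFunc.X ^ s) ^ (2 * k) := by
    rw [X_zpow_pow, X_zpow_pow, ← zpow_sub₀ RatFunc.X_ne_zero]
    congr 1
    push_cast
    ring
  rw [hexp', qPochhammerPair_two, ← zpow_add₀ RatFunc.X_ne_zero, ← zpow_add₀ RatFunc.X_ne_zero,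
    add_comm s, add_comm s]
  rfl

end SpecializedSums

theorem stmt0_general (n : ℕ) (s : ℤ) (hodd : Odd n) (h3 : ¬ 3 ∣ s)
    (hns : (n : ℤ) ≡ s [ZMOD (3 : ℤ)]) (hlower : -2 * (n : ℤ) < s) (hupper : s ≤ n) :
    ((cyclotomic n ℚ).comp (-X)) ^ 3 * (cyclotomic n ℚ) ^ 2 ∣
      RatFunc.num
        ((∑ k ∈ Finset.range ((((n : ℤ) - s) / 3).toNat + 1),
            (-1 : RatFunc ℚ) ^ k *
              ((1 + RatFunc.X ^ (6 * (k : ℤ) + s)) *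
                qPoch (RatFunc.X ^ (2 * s)) (RatFunc.X ^ (6 : ℤ)) k ^ 3) /
              ((1 + RatFunc.X ^ s) *
                qPoch (RatFunc.X ^ (6 : ℤ)) (RatFunc.X ^ (6 : ℤ)) k ^ 3) *
              RatFunc.X ^ (3 * (k : ℤ) ^ 2 + 2 * (k : ℤ) * (3 - s))) -
          (-1 : RatFunc ℚ) ^ (((n : ℤ) - s) / 3).toNat *
            (qInt (RatFunc.X ^ (2 : ℤ)) (n : ℤ) / qInt (RatFunc.X ^ (2 : ℤ)) s) *
            RatFunc.X ^ (((n : ℤ) - s) * ((n : ℤ) + s - 3) / 3) *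
            ∑ k ∈ Finset.range ((((n : ℤ) - s) / 3).toNat + 1),
              qPoch (RatFunc.X ^ (2 * s)) (RatFunc.X ^ (6 : ℤ)) k ^ 2 *
                qPoch (RatFunc.X ^ (3 : ℤ)) (RatFunc.X ^ (6 : ℤ)) k /
                (qPoch (RatFunc.X ^ (6 : ℤ)) (RatFunc.X ^ (6 : ℤ)) k *
                  qPoch (RatFunc.X ^ (3 + s)) (RatFunc.X ^ (6 : ℤ)) k *
                  qPoch (RatFunc.X ^ (6 + s)) (RatFunc.X ^ (6 : ℤ)) k) *
                RatFunc.X ^ (2 * (k : ℤ) * (3 - s))) := by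
  obtain ⟨t, ht⟩ := hns.symm.dvd
  lift t to ℕ using by omega with N
  have hn : (n : ℤ) = s + 3 * N := by omega
  have hN : (((n : ℤ) - s) / 3).toNat = N := by omega
  rw [hN, sum_eq_leftSum, sum_eq_rightSum hn]
  exact dvd_num_leftSum_sub_rightSum hodd h3 hn hlower

theorem stmt0 (n : ℕ) (s : ℤ) (hpos : 0 < n) (hodd : Odd n)
    (hs : s = 1 ∨ s = -1) (hns : (n : ℤ) ≡ s [ZMOD (3 : ℤ)]) :
    ((cyclotomic n ℚ).comp (-X)) ^ 3 * (cyclotomic n ℚ) ^ 2 ∣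
      RatFunc.num
        ((∑ k ∈ Finset.range ((((n : ℤ) - s) / 3).toNat + 1),
            (-1 : RatFunc ℚ) ^ k *
              ((1 + RatFunc.X ^ (6 * (k : ℤ) + s)) *
                qPoch (RatFunc.X ^ (2 * s)) (RatFunc.X ^ (6 : ℤ)) k ^ 3) /
              ((1 + RatFunc.X ^ s) *
                qPoch (RatFunc.X ^ (6 : ℤ)) (RatFunc.X ^ (6 : ℤ)) k ^ 3) *
              RatFunc.X ^ (3 * (k : ℤ) ^ 2 + 2 * (k : ℤ) * (3 - s))) -
          (-1 : RatFunc ℚ) ^ (((n : ℤ) - s) / 3).toNat *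
            (qInt (RatFunc.X ^ (2 : ℤ)) (n : ℤ) / qInt (RatFunc.X ^ (2 : ℤ)) s) *
            RatFunc.X ^ (((n : ℤ) - s) * ((n : ℤ) + s - 3) / 3) *
            ∑ k ∈ Finset.range ((((n : ℤ) - s) / 3).toNat + 1),
              qPoch (RatFunc.X ^ (2 * s)) (RatFunc.X ^ (6 : ℤ)) k ^ 2 *
                qPoch (RatFunc.X ^ (3 : ℤ)) (RatFunc.X ^ (6 : ℤ)) k /
                (qPoch (RatFunc.X ^ (6 : ℤ)) (RatFunc.X ^ (6 : ℤ)) k *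
                  qPoch (RatFunc.X ^ (3 + s)) (RatFunc.X ^ (6 : ℤ)) k *
                  qPoch (RatFunc.X ^ (6 + s)) (RatFunc.X ^ (6 : ℤ)) k) *
                RatFunc.X ^ (2 * (k : ℤ) * (3 - s))) := by
  exact stmt0_general n s hodd (by omega) hns (by omega) (by omega)
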